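/- Let a, b > 0 be distinct positive reals and b1, b2 ∈ ℝ. Set v1 = -(r1/(a² + c1) + r2/(a² + c2)) and similarly define the velocity function v(s) = r1/(s + c1) + r2/(s + c2) for s > 0, with c1, c2 > 0, c1 ≠ c2, r1 > 0 > r2. Then v is not monotone on (0, ∞) in general, but if r1 and r2 have the same sign then v is strictly monotone on (0, ∞); hence with σ1 = σ2 the equal-velocity equation v(a1²) = v(a2²) forces a1² = a2², so moving dark-dark soliton bound states require σ1 and σ2 to have opposite signs. -/

import Mathlib

/-!
On `(0, ∞)` each `s ↦ 1 / (s + cᵢ)` is strictly decreasing because `cᵢ > 0`. Coefficients of a common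
sign make both summands of `v` strictly monotone in the same direction, hence also their sum:
decreasing if both are positive, increasing if both are negative. Either way `v` is injective on
`(0, ∞)`, which contains every `a ^ 2` with `a ≠ 0`.
-/

theorem strictAntiOn_div_add {r c : ℝ} (hr : 0 < r) (hc : 0 < c) :
    StrictAntiOn (fun s : ℝ => r / (s + c)) (Set.Ioi 0) := by
  intro x hx y _ hxy
  have hx0 : 0 < x := hx
  exact div_lt_div_of_pos_left hr (by linarith) (by linarith)

theorem strictMonoOn_div_add {r c : ℝ} (hr : r < 0) (hc : 0 < c) :
    StrictMonoOn (fun s : ℝ => r / (s + c)) (Set.Ioi 0) := by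
  intro x hx y hy hxy
  have h := strictAntiOn_div_add (neg_pos.mpr hr) hc hx hy hxy
  simp only [neg_div] at h
  exact neg_lt_neg_iff.mp h

theorem stmt_19 (c1 c2 r1 r2 : ℝ) (hc1 : 0 < c1) (hc2 : 0 < c2) (hc : c1 ≠ c2)
    (hr1 : r1 ≠ 0) (hr2 : r2 ≠ 0) (hsign : 0 < r1 * r2)
    (v : ℝ → ℝ) (hv : ∀ s, v s = r1 / (s + c1) + r2 / (s + c2)) :
    (StrictMonoOn v (Set.Ioi 0) ∨ StrictAntiOn v (Set.Ioi 0)) ∧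
    ∀ a1 a2 : ℝ, a1 ≠ 0 → a2 ≠ 0 → v (a1^2) = v (a2^2) → a1^2 = a2^2 := by
  obtain rfl : v = fun s => r1 / (s + c1) + r2 / (s + c2) := funext hv
  have hmono : StrictMonoOn (fun s => r1 / (s + c1) + r2 / (s + c2)) (Set.Ioi 0) ∨
      StrictAntiOn (fun s => r1 / (s + c1) + r2 / (s + c2)) (Set.Ioi 0) := by
    rcases mul_pos_iff.mp hsign with ⟨h1, h2⟩ | ⟨h1, h2⟩
    · exact Or.inr ((strictAntiOn_div_add h1 hc1).add (strictAntiOn_div_add h2 hc2))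
    · exact Or.inl ((strictMonoOn_div_add h1 hc1).add (strictMonoOn_div_add h2 hc2))
  refine ⟨hmono, fun a1 a2 h1 h2 h => ?_⟩
  have hinj := hmono.elim StrictMonoOn.injOn StrictAntiOn.injOn
  exact hinj (sq_pos_of_ne_zero h1) (sq_pos_of_ne_zero h2) h
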